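/- arXiv:1410.5535 — 8 statements merged into one kernel-verified Lean document; each statement's English description precedes it below -/
import Mathlib

section
/- Let n ≥ 2 be an integer and let m be a real number with 0 ≤ m ≤ n/2. Then there exists a constant C > 0 (depending only on n and m) such that for every ε ∈ (0,1): if m < n/2 then ∫_{B_{ε^{-1}}(0)} (τ² + |z|⁴)^m / (τ² + (1+|z|²)²)^{n+1} dz dτ ≤ C + C ε^{2n−4m}, and if m = n/2 then ∫_{B_{ε^{-1}}(0)} (τ² + |z|⁴)^m / (τ² + (1+|z|²)²)^{n+1} dz dτ ≤ C + C log(1/ε). -/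
open MeasureTheory Real Set

/-- `normSq z = |z|²` for `z ∈ ℂⁿ`. -/
noncomputable def normSq {n : ℕ} (z : Fin n → ℂ) : ℝ := ∑ i, ‖z i‖ ^ 2

/-- The gauge ball `{(z,τ) : (|z|⁴ + τ²)^(1/4) ≤ R}` in the Heisenberg group `ℂⁿ × ℝ`. -/
noncomputable def gaugeBall (n : ℕ) (R : ℝ) : Set ((Fin n → ℂ) × ℝ) :=
  {p | (normSq p.1 ^ 2 + p.2 ^ 2) ^ ((1 : ℝ) / 4) ≤ R}

theorem normSq_ge {n : ℕ} (z : Fin n → ℂ) : ‖z‖ ^ 2 ≤ normSq z := by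
  have h0 : 0 ≤ normSq z := Finset.sum_nonneg fun i _ => by positivity
  have h : ‖z‖ ≤ Real.sqrt (normSq z) := by
    rw [pi_norm_le_iff_of_nonneg (Real.sqrt_nonneg _)]
    intro i
    apply Real.le_sqrt_of_sq_le
    exact Finset.single_le_sum (f := fun i => ‖z i‖ ^ 2) (fun i _ => by positivity)
      (Finset.mem_univ i)
  calc ‖z‖ ^ 2 ≤ Real.sqrt (normSq z) ^ 2 := by gcongr
    _ = normSq z := Real.sq_sqrt h0

theorem pointwise_bound (n : ℕ) (m : ℝ) (hm0 : 0 ≤ m) (hm1 : m ≤ (n : ℝ) / 2)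
    (p : (Fin n → ℂ) × ℝ) :
    (p.2 ^ 2 + normSq p.1 ^ 2) ^ m / (p.2 ^ 2 + (1 + normSq p.1) ^ 2) ^ (n + 1) ≤
      (1 + ‖p.1‖ ^ 2) ^ (-(2 * (n : ℝ) + 1) / 2) * (1 + ‖p.2‖ ^ 2) ^ (-(3 / 2 : ℝ) / 2) := by
  obtain ⟨z, t⟩ := p
  have hz := normSq_ge z
  have hz0 : 0 ≤ ‖z‖ ^ 2 := by positivity
  simp only [Real.norm_eq_abs, sq_abs]
  set w := normSq z
  set B := t ^ 2 + (1 + w) ^ 2 with hB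
  have hw : 0 ≤ w := hz0.trans hz
  have hB1 : 1 ≤ B := by nlinarith [sq_nonneg t]
  have hB0 : 0 < B := by linarith
  have ht : 1 + t ^ 2 ≤ B := by nlinarith
  have hzB : (1 + ‖z‖ ^ 2) ^ 2 ≤ B := by nlinarith [sq_nonneg t]
  have h1 : (t ^ 2 + w ^ 2) ^ m ≤ B ^ m :=
    Real.rpow_le_rpow (by positivity) (by nlinarith) hm0
  calc (t ^ 2 + w ^ 2) ^ m / B ^ (n + 1) ≤ B ^ m / B ^ (n + 1) := by gcongr
    _ = B ^ (m - (n + 1)) := by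
      rw [Real.rpow_sub hB0, ← Real.rpow_natCast]; push_cast; rfl
    _ ≤ B ^ (-(2 * (n : ℝ) + 1) / 4 + -(3 / 2 : ℝ) / 2) :=
      Real.rpow_le_rpow_of_exponent_le hB1 (by linarith)
    _ = B ^ (-(2 * (n : ℝ) + 1) / 4) * B ^ (-(3 / 2 : ℝ) / 2) := Real.rpow_add hB0 _ _
    _ ≤ ((1 + ‖z‖ ^ 2) ^ 2) ^ (-(2 * (n : ℝ) + 1) / 4) * (1 + t ^ 2) ^ (-(3 / 2 : ℝ) / 2) := by
      apply mul_le_mul _ _ (by positivity) (by positivity)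
      · apply Real.rpow_le_rpow_of_nonpos (by positivity) hzB
        have : (0 : ℝ) ≤ n := by positivity
        linarith
      · exact Real.rpow_le_rpow_of_nonpos (by positivity) ht (by norm_num)
    _ = _ := by
      congr 1
      rw [← Real.rpow_natCast, ← Real.rpow_mul (by positivity)]
      congr 1
      push_cast
      ring

theorem stmt_0 (n : ℕ) (hn : 2 ≤ n) (m : ℝ) (hm0 : 0 ≤ m) (hm1 : m ≤ (n : ℝ) / 2) :
    ∃ C : ℝ, 0 < C ∧ ∀ ε : ℝ, ε ∈ Ioo (0 : ℝ) 1 →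
      (m < (n : ℝ) / 2 →
        (∫ p in gaugeBall n ε⁻¹,
            (p.2 ^ 2 + normSq p.1 ^ 2) ^ m /
              (p.2 ^ 2 + (1 + normSq p.1) ^ 2) ^ (n + 1)) ≤
          C + C * ε ^ (2 * (n : ℝ) - 4 * m)) ∧
      (m = (n : ℝ) / 2 →
        (∫ p in gaugeBall n ε⁻¹,
            (p.2 ^ 2 + normSq p.1 ^ 2) ^ m /
              (p.2 ^ 2 + (1 + normSq p.1) ^ 2) ^ (n + 1)) ≤
          C + C * Real.log (1 / ε)) := by
  set g : (Fin n → ℂ) × ℝ → ℝ := fun p =>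
    (1 + ‖p.1‖ ^ 2) ^ (-(2 * (n : ℝ) + 1) / 2) * (1 + ‖p.2‖ ^ 2) ^ (-(3 / 2 : ℝ) / 2) with hg
  have hgi : Integrable g := by
    have a1 : Integrable (fun z : Fin n → ℂ => (1 + ‖z‖ ^ 2) ^ (-(2 * (n : ℝ) + 1) / 2)) := by
      apply integrable_rpow_neg_one_add_norm_sq
      have : Module.finrank ℝ (Fin n → ℂ) = n * 2 := by
        rw [Module.finrank_pi_fintype]; simp
      rw [this]; push_cast; linarith
    have a2 : Integrable (fun t : ℝ => (1 + ‖t‖ ^ 2) ^ (-(3 / 2 : ℝ) / 2)) := by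
      apply integrable_rpow_neg_one_add_norm_sq
      simp; norm_num
    exact a1.mul_prod a2
  have hg0 : ∀ p, 0 ≤ g p := fun p => by simp only [hg]; positivity
  have hI : 0 ≤ ∫ p, g p := integral_nonneg hg0
  have key : ∀ S : Set ((Fin n → ℂ) × ℝ), (∫ p in S, (p.2 ^ 2 + normSq p.1 ^ 2) ^ m /
              (p.2 ^ 2 + (1 + normSq p.1) ^ 2) ^ (n + 1)) ≤ (∫ p, g p) + 1 := by
    intro S
    have h1 : (∫ p in S, (p.2 ^ 2 + normSq p.1 ^ 2) ^ m /
              (p.2 ^ 2 + (1 + normSq p.1) ^ 2) ^ (n + 1)) ≤ ∫ p in S, g p := by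
      apply integral_mono_of_nonneg
      · exact Filter.Eventually.of_forall fun p => by
          simp only [Pi.zero_apply]; positivity
      · exact hgi.integrableOn
      · exact Filter.Eventually.of_forall fun p => pointwise_bound n m hm0 hm1 p
    have h2 := setIntegral_le_integral (s := S) hgi (Filter.Eventually.of_forall hg0)
    linarith
  refine ⟨(∫ p, g p) + 1, by linarith, fun ε hε => ⟨fun _ => ?_, fun _ => ?_⟩⟩
  · have : 0 ≤ ((∫ p, g p) + 1) * ε ^ (2 * (n : ℝ) - 4 * m) :=
      mul_nonneg (by linarith) (Real.rpow_nonneg hε.1.le _)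
    linarith [key (gaugeBall n ε⁻¹)]
  · have : 0 ≤ ((∫ p, g p) + 1) * Real.log (1 / ε) :=
      mul_nonneg (by linarith) (Real.log_nonneg (by
        rw [le_div_iff₀ hε.1]; linarith [hε.2]))
    linarith [key (gaugeBall n ε⁻¹)]
end

section
/- For every integer n ≥ 1, the improper integrals ∫₀^∞ (r² − 1) r^{n+1} / (r² + 1)^{n+2} dr and ∫₁^∞ (r² − 1)² r^{n−1} / (r² + 1)^{n+2} dr converge, they are equal, and their common value is strictly positive. -/
open MeasureTheory Real Set

theorem aux_pow_le (m : ℕ) (r : ℝ) (hr : 0 < r) : r ^ m ≤ (r ^ 2 + 1) ^ m :=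
  pow_le_pow_left₀ hr.le (by nlinarith [sq_nonneg (r - 1)]) m

theorem aux_f_bound (m : ℕ) (r : ℝ) (hr : 0 < r) :
    ‖(r ^ 2 - 1) * r ^ (m + 1 + 1) / (r ^ 2 + 1) ^ (m + 1 + 2)‖ ≤ (1 + r ^ 2)⁻¹ := by
  have h1 : |r ^ 2 - 1| ≤ r ^ 2 + 1 := abs_le.2 ⟨by nlinarith, by nlinarith⟩
  have h2 : r ^ 2 ≤ r ^ 2 + 1 := by linarith
  have h3 := aux_pow_le m r hr
  have hp : 0 < r ^ 2 + 1 := by positivity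
  rw [Real.norm_eq_abs, abs_div, abs_mul, abs_of_pos (pow_pos hr _), abs_of_pos (pow_pos hp _),
    add_comm 1 (r ^ 2), div_le_iff₀ (pow_pos hp _)]
  calc |r ^ 2 - 1| * r ^ (m + 1 + 1) = |r ^ 2 - 1| * (r ^ m * r ^ 2) := by ring
    _ ≤ (r ^ 2 + 1) * ((r ^ 2 + 1) ^ m * (r ^ 2 + 1)) := by gcongr
    _ = (r ^ 2 + 1)⁻¹ * (r ^ 2 + 1) ^ (m + 1 + 2) := by
      field_simp
      try ring

theorem aux_g_bound (m : ℕ) (r : ℝ) (hr : 0 < r) :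
    ‖(r ^ 2 - 1) ^ 2 * r ^ m / (r ^ 2 + 1) ^ (m + 1 + 2)‖ ≤ (1 + r ^ 2)⁻¹ := by
  have h1 : |r ^ 2 - 1| ≤ r ^ 2 + 1 := abs_le.2 ⟨by nlinarith, by nlinarith⟩
  have h3 := aux_pow_le m r hr
  have hp : 0 < r ^ 2 + 1 := by positivity
  rw [Real.norm_eq_abs, abs_div, abs_mul, abs_of_pos (pow_pos hr _), abs_of_pos (pow_pos hp _),
    add_comm 1 (r ^ 2), div_le_iff₀ (pow_pos hp _), abs_pow]
  calc |r ^ 2 - 1| ^ 2 * r ^ m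
    _ ≤ (r ^ 2 + 1) ^ 2 * (r ^ 2 + 1) ^ m := by gcongr
    _ = (r ^ 2 + 1)⁻¹ * (r ^ 2 + 1) ^ (m + 1 + 2) := by
      field_simp
      try ring

theorem aux_f_cont (a b c : ℕ) :
    Continuous (fun r : ℝ => (r ^ 2 - 1) ^ a * r ^ b / (r ^ 2 + 1) ^ c) := by
  refine Continuous.div (by fun_prop) (by fun_prop) fun r => ?_
  positivity

theorem aux_image : (fun r : ℝ => r⁻¹) '' Ioi 1 = Ioo 0 1 := by
  ext x
  constructor
  · rintro ⟨r, hr, rfl⟩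
    exact ⟨inv_pos.2 (one_pos.trans hr), inv_lt_one_of_one_lt₀ hr⟩
  · rintro ⟨h0, h1⟩
    exact ⟨x⁻¹, (one_lt_inv₀ h0).2 h1, inv_inv x⟩

theorem stmt_4 (n : ℕ) (hn : 1 ≤ n) :
    IntegrableOn (fun r : ℝ => (r ^ 2 - 1) * r ^ (n + 1) / (r ^ 2 + 1) ^ (n + 2))
      (Ioi (0 : ℝ)) ∧
    IntegrableOn (fun r : ℝ => (r ^ 2 - 1) ^ 2 * r ^ (n - 1) / (r ^ 2 + 1) ^ (n + 2))
      (Ioi (1 : ℝ)) ∧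
    (∫ r in Ioi (0 : ℝ), (r ^ 2 - 1) * r ^ (n + 1) / (r ^ 2 + 1) ^ (n + 2)) =
      (∫ r in Ioi (1 : ℝ), (r ^ 2 - 1) ^ 2 * r ^ (n - 1) / (r ^ 2 + 1) ^ (n + 2)) ∧
    0 < ∫ r in Ioi (0 : ℝ), (r ^ 2 - 1) * r ^ (n + 1) / (r ^ 2 + 1) ^ (n + 2) := by
  obtain ⟨m, rfl⟩ : ∃ m, n = m + 1 := ⟨n - 1, by omega⟩
  simp only [Nat.add_sub_cancel]
  set f : ℝ → ℝ := fun r => (r ^ 2 - 1) * r ^ (m + 1 + 1) / (r ^ 2 + 1) ^ (m + 1 + 2) with hf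
  set g : ℝ → ℝ := fun r => (r ^ 2 - 1) ^ 2 * r ^ m / (r ^ 2 + 1) ^ (m + 1 + 2) with hg
  have hfc : Continuous f := by
    have := aux_f_cont 1 (m + 1 + 1) (m + 1 + 2)
    simpa only [pow_one] using this
  have hgc : Continuous g := aux_f_cont 2 m (m + 1 + 2)
  have hfi : IntegrableOn f (Ioi 0) := by
    refine Integrable.mono' (integrable_inv_one_add_sq.integrableOn) hfc.aestronglyMeasurable ?_
    filter_upwards [ae_restrict_mem measurableSet_Ioi] with r hr
    exact aux_f_bound m r hr
  have hgi : IntegrableOn g (Ioi 1) := by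
    refine Integrable.mono' (integrable_inv_one_add_sq.integrableOn) hgc.aestronglyMeasurable ?_
    filter_upwards [ae_restrict_mem measurableSet_Ioi] with r hr
    exact aux_g_bound m r (one_pos.trans hr)
  have hd : ∀ x ∈ Ioi (1 : ℝ), HasDerivWithinAt (fun r : ℝ => r⁻¹) (-(x ^ 2)⁻¹) (Ioi 1) x :=
    fun x hx => (hasDerivAt_inv (one_pos.trans hx).ne').hasDerivWithinAt
  have hinj : InjOn (fun r : ℝ => r⁻¹) (Ioi 1) := inv_injective.injOn
  have hcv := integral_image_eq_integral_abs_deriv_smul measurableSet_Ioi hd hinj f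
  have hci := (integrableOn_image_iff_integrableOn_abs_deriv_smul measurableSet_Ioi hd hinj f).1
    (by rw [aux_image]; exact hfi.mono_set Ioo_subset_Ioi_self)
  rw [aux_image] at hcv
  have hf1 : IntegrableOn f (Ioi 1) := hfi.mono_set (Ioi_subset_Ioi zero_le_one)
  have heq : (∫ r in Ioi (0 : ℝ), f r) = ∫ r in Ioi (1 : ℝ), g r := by
    rw [← Ioc_union_Ioi_eq_Ioi (zero_le_one (α := ℝ)),
      setIntegral_union (Ioc_disjoint_Ioi le_rfl) measurableSet_Ioi
        (hfi.mono_set Ioc_subset_Ioi_self) hf1,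
      integral_Ioc_eq_integral_Ioo, hcv, ← integral_add hci hf1]
    refine setIntegral_congr_fun measurableSet_Ioi fun r hr => ?_
    have hr0 : 0 < r := one_pos.trans hr
    have e : ((r⁻¹) ^ 2 + 1) = (r ^ 2 + 1) / r ^ 2 := by field_simp; try ring
    have hp : 0 < r ^ 2 + 1 := by positivity
    simp only [hf, hg, smul_eq_mul, abs_neg, abs_of_pos (inv_pos.2 (pow_pos hr0 2))]
    rw [e, div_pow, inv_pow r (m + 1 + 1)]
    field_simp
    ring
  refine ⟨hfi, hgi, heq, ?_⟩
  rw [heq]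
  have hpos : ∀ r ∈ Ioi (1 : ℝ), 0 < g r := by
    intro r hr
    have hr1 : 1 < r := hr
    have : 0 < r ^ 2 - 1 := by nlinarith
    have hr0 : 0 < r := one_pos.trans hr1
    simp only [hg]
    positivity
  rw [setIntegral_pos_iff_support_of_nonneg_ae ?_ hgi]
  · have : Function.support g ∩ Ioi 1 = Ioi 1 :=
      inter_eq_right.2 fun r hr => (hpos r hr).ne'
    rw [this]
    simp
  · filter_upwards [ae_restrict_mem measurableSet_Ioi] with r hr
    exact (hpos r hr).le
end

section
/- Let n ≥ 2 be an integer. Then the function (r,τ) ↦ (r⁴ − τ²) r^{2n+1} / ((r⁴ + τ²)(τ² + (1+r²)²)^{n+1}) is integrable on (0,∞) × (0,∞) and ∫₀^∞ ∫₀^∞ (r⁴ − τ²) r^{2n+1} / ((r⁴ + τ²)(τ² + (1+r²)²)^{n+1}) dr dτ > 0. -/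
open MeasureTheory Real Set

/-- The integrand after the substitution `s = r ^ 2`. -/
noncomputable def gAux (n : ℕ) (p : ℝ × ℝ) : ℝ :=
  (p.1 ^ 2 - p.2 ^ 2) * p.1 ^ n /
        ((p.1 ^ 2 + p.2 ^ 2) * (p.2 ^ 2 + (1 + p.1) ^ 2) ^ (n + 1))

lemma base_integrable :
    Integrable (fun p : ℝ × ℝ => (1 + p.1 ^ 2)⁻¹ * (1 + p.2 ^ 2)⁻¹)
      ((volume.restrict (Ioi (0 : ℝ))).prod (volume.restrict (Ioi (0 : ℝ)))) :=
  Integrable.mul_prod (integrable_inv_one_add_sq.restrict) (integrable_inv_one_add_sq.restrict)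

lemma ae_quadrant : ∀ᵐ p : ℝ × ℝ ∂((volume.restrict (Ioi (0 : ℝ))).prod
    (volume.restrict (Ioi (0 : ℝ)))), 0 < p.1 ∧ 0 < p.2 := by
  rw [Measure.prod_restrict]
  exact ae_restrict_mem (measurableSet_Ioi.prod measurableSet_Ioi)

/-- Common bound. -/
lemma frac_bound {a b P D E B t : ℝ} (ha : 0 ≤ a) (hb : 0 < b) (hP : 0 ≤ P) (hB : 0 < B)
    (ht : 0 < t) (hE : 0 < E) (hD : E * t ≤ D) (hPE : P * B ≤ E) :
    |(a - b) * P / ((a + b) * D)| ≤ B⁻¹ * t⁻¹ := by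
  have hDpos : 0 < D := lt_of_lt_of_le (by positivity) hD
  have hab : |a - b| ≤ a + b := by rw [abs_le]; constructor <;> linarith
  rw [abs_div, abs_mul, abs_of_nonneg hP, abs_of_pos (show 0 < (a + b) * D by positivity),
    ← mul_inv, div_le_iff₀ (by positivity), inv_mul_eq_div, le_div_iff₀ (by positivity)]
  calc |a - b| * P * (B * t) = |a - b| * ((P * B) * t) := by ring
    _ ≤ (a + b) * (E * t) := by gcongr
    _ ≤ (a + b) * D := by gcongr

lemma pow_split {x y t : ℝ} (n : ℕ) (hx : 0 ≤ x) (ht : 0 ≤ t) (h1 : x ≤ y) (h2 : t ≤ y) :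
    x ^ n * t ≤ y ^ (n + 1) := by
  have : 0 ≤ y := hx.trans h1
  rw [pow_succ]; gcongr

lemma g_integrable (n : ℕ) (hn : 2 ≤ n) : Integrable (gAux n)
      ((volume.restrict (Ioi (0 : ℝ))).prod (volume.restrict (Ioi (0 : ℝ)))) := by
  refine base_integrable.mono' ?_ ?_
  · apply Measurable.aestronglyMeasurable
    unfold gAux
    fun_prop
  · filter_upwards [ae_quadrant] with p ⟨h1, h2⟩
    rw [Real.norm_eq_abs]
    refine frac_bound (E := ((1 + p.1) ^ 2) ^ n) (by positivity) (by positivity) (by positivity)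
      (by positivity) (by positivity) (by positivity)
      (pow_split n (by positivity) (by positivity) (by nlinarith) (by nlinarith)) ?_
    obtain ⟨m, rfl⟩ := Nat.exists_eq_add_of_le hn
    calc p.1 ^ (2 + m) * (1 + p.1 ^ 2) ≤ (1 + p.1) ^ (2 + m) * (1 + p.1) ^ 2 := by
          gcongr
          · linarith
          · nlinarith
      _ = (1 + p.1) ^ (4 + m) := by ring
      _ ≤ (1 + p.1) ^ (2 * (2 + m)) := by
          apply pow_le_pow_right₀ <;> linarith
      _ = _ := by rw [pow_mul]

lemma key (n : ℕ) (hn : 1 ≤ n) {s t : ℝ} (ht : 0 < t) (hst : t < s) :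
    t ^ n / (s ^ 2 + (1 + t) ^ 2) ^ (n + 1) < s ^ n / (t ^ 2 + (1 + s) ^ 2) ^ (n + 1) := by
  have hs : 0 < s := ht.trans hst
  obtain ⟨m, rfl⟩ := Nat.exists_eq_add_of_le hn
  have e : ∀ x y : ℝ, x ^ (1 + m) / y ^ (1 + m + 1) = (x / y) ^ m * (x / y ^ 2) := by
    intro x y
    rw [div_pow, div_mul_div_comm]; ring
  rw [e, e]
  have hA : t / (s ^ 2 + (1 + t) ^ 2) ≤ s / (t ^ 2 + (1 + s) ^ 2) := by
    rw [div_le_div_iff₀ (by positivity) (by positivity)]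
    have : 0 ≤ (s - t) * (1 + s ^ 2 + t ^ 2) := mul_nonneg (by linarith) (by positivity)
    nlinarith
  have hB : t / (s ^ 2 + (1 + t) ^ 2) ^ 2 < s / (t ^ 2 + (1 + s) ^ 2) ^ 2 := by
    rw [div_lt_div_iff₀ (by positivity) (by positivity)]
    have h0 : 0 < s * t := by positivity
    have h3 : 0 < (1 + s ^ 2 + t ^ 2) ^ 2 - 4 * (s * t) := by
      have : 1 + 2 * (s * t) ≤ 1 + s ^ 2 + t ^ 2 := by nlinarith [sq_nonneg (s - t)]
      nlinarith
    have : 0 < (s - t) * ((1 + s ^ 2 + t ^ 2) ^ 2 - 4 * (s * t)) := mul_pos (by linarith) h3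
    nlinarith
  calc _ ≤ (s / (t ^ 2 + (1 + s) ^ 2)) ^ m * (t / (s ^ 2 + (1 + t) ^ 2) ^ 2) := by gcongr
    _ < _ := by gcongr

lemma sum_eq (n : ℕ) (s t : ℝ) : gAux n (s, t) + gAux n (t, s) =
    (s ^ 2 - t ^ 2) / (s ^ 2 + t ^ 2) * (s ^ n / (t ^ 2 + (1 + s) ^ 2) ^ (n + 1)
      - t ^ n / (s ^ 2 + (1 + t) ^ 2) ^ (n + 1)) := by
  simp only [gAux]
  rw [mul_div_mul_comm, mul_div_mul_comm, add_comm (t ^ 2) (s ^ 2)]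
  ring

lemma sum_pos_of_lt (n : ℕ) (hn : 1 ≤ n) {s t : ℝ} (ht : 0 < t) (hst : t < s) :
    0 < gAux n (s, t) + gAux n (t, s) := by
  rw [sum_eq]
  have := key n hn ht hst
  have hs : 0 < s := ht.trans hst
  apply mul_pos
  · apply div_pos <;> nlinarith
  · linarith

lemma sum_nonneg_q (n : ℕ) (hn : 1 ≤ n) {s t : ℝ} (ht : 0 < t) (hs : 0 < s) :
    0 ≤ gAux n (s, t) + gAux n (t, s) := by
  rcases lt_trichotomy s t with h | h | h
  · rw [add_comm]; exact (sum_pos_of_lt n hn hs h).le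
  · subst h; simp [sum_eq]
  · exact (sum_pos_of_lt n hn ht h).le

lemma g_pos (n : ℕ) (hn : 2 ≤ n) :
    0 < ∫ p, gAux n p ∂((volume.restrict (Ioi (0 : ℝ))).prod (volume.restrict (Ioi (0 : ℝ)))) := by
  have hi := g_integrable n hn
  have hi2 : Integrable (fun p : ℝ × ℝ => gAux n p.swap) ((volume.restrict (Ioi (0 : ℝ))).prod
      (volume.restrict (Ioi (0 : ℝ)))) := hi.swap
  have hsum : 0 < ∫ p, (gAux n p + gAux n p.swap)
      ∂((volume.restrict (Ioi (0 : ℝ))).prod (volume.restrict (Ioi (0 : ℝ)))) := by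
    rw [integral_pos_iff_support_of_nonneg_ae]
    · have hsub : Ioo (2 : ℝ) 3 ×ˢ Ioo (0 : ℝ) 1 ⊆
          Function.support (fun p : ℝ × ℝ => gAux n p + gAux n p.swap) := by
        rintro ⟨s, t⟩ ⟨hs, ht⟩
        simp only [mem_Ioo] at hs ht
        exact (sum_pos_of_lt n (by omega) ht.1 (by linarith)).ne'
      refine lt_of_lt_of_le ?_ (measure_mono hsub)
      rw [Measure.prod_prod, Measure.restrict_apply measurableSet_Ioo,
        Measure.restrict_apply measurableSet_Ioo,
        inter_eq_left.2 (show Ioo (2 : ℝ) 3 ⊆ Ioi 0 from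
          fun x hx => lt_trans (by norm_num) hx.1),
        inter_eq_left.2 (show Ioo (0 : ℝ) 1 ⊆ Ioi 0 from fun x hx => hx.1)]
      simp
      norm_num
    · filter_upwards [ae_quadrant] with p ⟨h1, h2⟩
      exact sum_nonneg_q n (by omega) h2 h1
    · exact hi.add hi2
  rw [integral_add hi hi2, integral_prod_swap] at hsum
  linarith

lemma subst_inner (n : ℕ) (τ : ℝ) :
    ∫ r in Ioi (0 : ℝ), (r ^ 4 - τ ^ 2) * r ^ (2 * n + 1) /
          ((r ^ 4 + τ ^ 2) * (τ ^ 2 + (1 + r ^ 2) ^ 2) ^ (n + 1)) =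
    (1 / 2) * ∫ s in Ioi (0 : ℝ), gAux n (s, τ) := by
  rw [← integral_comp_rpow_Ioi_of_pos (g := fun s => gAux n (s, τ)) (p := 2) (by norm_num),
    ← integral_const_mul]
  refine setIntegral_congr_fun measurableSet_Ioi fun r hr => ?_
  simp only [gAux, smul_eq_mul]
  have h1 : r ^ ((2 : ℝ) - 1) = r := by norm_num
  rw [h1, Real.rpow_two, ← pow_mul, ← pow_mul, pow_succ r (2 * n)]
  ring

theorem stmt_5 (n : ℕ) (hn : 2 ≤ n) :
    IntegrableOn (fun p : ℝ × ℝ =>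
      (p.1 ^ 4 - p.2 ^ 2) * p.1 ^ (2 * n + 1) /
        ((p.1 ^ 4 + p.2 ^ 2) * (p.2 ^ 2 + (1 + p.1 ^ 2) ^ 2) ^ (n + 1)))
      (Ioi (0 : ℝ) ×ˢ Ioi (0 : ℝ)) ∧
    0 < ∫ τ in Ioi (0 : ℝ), ∫ r in Ioi (0 : ℝ),
        (r ^ 4 - τ ^ 2) * r ^ (2 * n + 1) /
          ((r ^ 4 + τ ^ 2) * (τ ^ 2 + (1 + r ^ 2) ^ 2) ^ (n + 1)) := by
  constructor
  · rw [IntegrableOn, Measure.volume_eq_prod, ← Measure.prod_restrict]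
    refine base_integrable.mono' ?_ ?_
    · apply Measurable.aestronglyMeasurable
      fun_prop
    · filter_upwards [ae_quadrant] with p ⟨h1, h2⟩
      rw [Real.norm_eq_abs]
      refine frac_bound (E := ((1 + p.1 ^ 2) ^ 2) ^ n) (by positivity) (by positivity)
        (by positivity) (by positivity) (by positivity) (by positivity)
        (pow_split n (by positivity) (by positivity) (by nlinarith) (by nlinarith)) ?_
      obtain ⟨m, rfl⟩ := Nat.exists_eq_add_of_le hn
      calc p.1 ^ (2 * (2 + m) + 1) * (1 + p.1 ^ 2)
          = (p.1 ^ 2) ^ (2 + m) * p.1 * (1 + p.1 ^ 2) := by rw [pow_succ, pow_mul]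
        _ ≤ (1 + p.1 ^ 2) ^ (2 + m) * (1 + p.1 ^ 2) * (1 + p.1 ^ 2) := by
            gcongr
            · linarith
            · nlinarith
        _ = (1 + p.1 ^ 2) ^ (4 + m) := by ring
        _ ≤ (1 + p.1 ^ 2) ^ (2 * (2 + m)) := by
            apply pow_le_pow_right₀
            · nlinarith
            · omega
        _ = _ := by rw [pow_mul]
  · simp_rw [subst_inner]
    rw [integral_const_mul, ← integral_prod_symm _ (g_integrable n hn)]
    have := g_pos n hn
    positivity
end

section
/- Let n ≥ 2 be an integer and let r > 0 be a real number. Then the function h(r,·) : z ↦ z^n / (r² + 2rz + 1)^{n+1} is monotone increasing on the interval [0,1]. Consequently, for every θ ∈ [0, π/4] one has h(r, cos θ) ≥ h(r, sin θ). -/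
open Real Set

theorem stmt_6 (n : ℕ) (hn : 2 ≤ n) (r : ℝ) (hr : 0 < r) :
    MonotoneOn (fun z : ℝ => z ^ n / (r ^ 2 + 2 * r * z + 1) ^ (n + 1)) (Icc (0 : ℝ) 1) ∧
    ∀ θ : ℝ, θ ∈ Icc (0 : ℝ) (π / 4) →
      Real.sin θ ^ n / (r ^ 2 + 2 * r * Real.sin θ + 1) ^ (n + 1) ≤
        Real.cos θ ^ n / (r ^ 2 + 2 * r * Real.cos θ + 1) ^ (n + 1) := by
  have key : MonotoneOn (fun z : ℝ => z ^ n / (r ^ 2 + 2 * r * z + 1) ^ (n + 1))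
      (Icc (0 : ℝ) 1) := by
    rintro x ⟨hx0, hx1⟩ y ⟨hy0, hy1⟩ hxy
    obtain ⟨m, rfl⟩ : ∃ m, n = m + 1 := ⟨n - 1, by omega⟩
    have hDx : 0 < r ^ 2 + 2 * r * x + 1 := by positivity
    have hDy : 0 < r ^ 2 + 2 * r * y + 1 := by positivity
    have split : ∀ z D : ℝ, z ^ (m + 1) / D ^ (m + 1 + 1) = (z / D) ^ m * (z / D ^ 2) := by
      intro z D
      rw [div_pow, div_mul_div_comm, ← pow_succ, ← pow_add]
    have h1 : x / (r ^ 2 + 2 * r * x + 1) ≤ y / (r ^ 2 + 2 * r * y + 1) := by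
      rw [div_le_div_iff₀ hDx hDy]
      nlinarith [mul_nonneg (sub_nonneg.2 hxy) (by positivity : 0 ≤ r ^ 2 + 1)]
    have h2 : x / (r ^ 2 + 2 * r * x + 1) ^ 2 ≤ y / (r ^ 2 + 2 * r * y + 1) ^ 2 := by
      rw [div_le_div_iff₀ (by positivity) (by positivity)]
      have hc : (2 * r) ^ 2 ≤ (r ^ 2 + 1) ^ 2 :=
        pow_le_pow_left₀ (by positivity) (by nlinarith [sq_nonneg (r - 1)]) 2
      have hxy1 : x * y ≤ 1 := mul_le_one₀ hx1 hy0 hy1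
      have h3 : 0 ≤ (r ^ 2 + 1) ^ 2 - (2 * r) ^ 2 * (x * y) := by
        nlinarith [mul_nonneg (sq_nonneg (2 * r)) (sub_nonneg.2 hxy1)]
      have h4 := mul_nonneg (sub_nonneg.2 hxy) h3
      linarith [h4]
    simp only [split]
    gcongr ?_ ^ m * ?_
  refine ⟨key, ?_⟩
  rintro θ ⟨h0, h1⟩
  have hpi := Real.pi_pos
  have hs : 0 ≤ Real.sin θ := Real.sin_nonneg_of_nonneg_of_le_pi h0 (by linarith)
  have hsc : Real.sin θ ≤ Real.cos θ := by
    rw [← Real.cos_pi_div_two_sub]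
    exact Real.cos_le_cos_of_nonneg_of_le_pi h0 (by linarith) (by linarith)
  exact key ⟨hs, Real.sin_le_one θ⟩ ⟨hs.trans hsc, Real.cos_le_one θ⟩ hsc
end

section
/- Let n ≥ 2 be an integer. There exists a constant C > 0 (depending only on n) such that for every ε ∈ (0,1): ∫₀^∞ ∫₀^∞ ε² r^{2n+3} / ( ((1+ε²r²)² + ε⁴τ²) (τ² + (1+r²)²)^{n+1} ) dτ dr ≤ C ε. -/
open MeasureTheory Real Set

theorem stmt_9_aux (n : ℕ) (hn : 2 ≤ n) (ε r τ : ℝ) (hε : 0 < ε) (hr : 0 < r) :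
    ε ^ 2 * r ^ (2 * n + 3) /
            (((1 + ε ^ 2 * r ^ 2) ^ 2 + ε ^ 4 * τ ^ 2) *
              (τ ^ 2 + (1 + r ^ 2) ^ 2) ^ (n + 1)) ≤
      (ε * (1 + r ^ 2)⁻¹) * (1 + τ ^ 2)⁻¹ := by
  have h1 : ε * r ≤ (1 + ε ^ 2 * r ^ 2) ^ 2 + ε ^ 4 * τ ^ 2 := by
    have : 0 ≤ ε ^ 4 * τ ^ 2 := by positivity
    nlinarith [sq_nonneg (ε * r - 1), mul_pos hε hr, sq_nonneg (ε ^ 2 * r ^ 2)]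
  have h2 : (1 + r ^ 2) ^ (2 * n) * (1 + τ ^ 2) ≤ (τ ^ 2 + (1 + r ^ 2) ^ 2) ^ (n + 1) := by
    rw [pow_succ _ n, pow_mul _ 2 n]
    have k1 : (1 + r ^ 2) ^ 2 ≤ τ ^ 2 + (1 + r ^ 2) ^ 2 := by nlinarith [sq_nonneg τ]
    have k2 : 1 + τ ^ 2 ≤ τ ^ 2 + (1 + r ^ 2) ^ 2 := by
      nlinarith [sq_nonneg r, sq_nonneg (r ^ 2)]
    exact mul_le_mul (pow_le_pow_left₀ (by positivity) k1 n) k2 (by positivity) (by positivity)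
  have h3 : r ^ (2 * n + 2) * (1 + r ^ 2) ≤ (1 + r ^ 2) ^ (2 * n) := by
    calc r ^ (2 * n + 2) * (1 + r ^ 2) = (r ^ 2) ^ (n + 1) * (1 + r ^ 2) := by
          rw [← pow_mul]; ring
      _ ≤ (1 + r ^ 2) ^ (n + 1) * (1 + r ^ 2) := by gcongr; linarith
      _ = (1 + r ^ 2) ^ (n + 2) := by ring
      _ ≤ _ := pow_le_pow_right₀ (by nlinarith [sq_nonneg r]) (by omega)
  have e : (ε * (1 + r ^ 2)⁻¹) * (1 + τ ^ 2)⁻¹ = ε / ((1 + r ^ 2) * (1 + τ ^ 2)) := by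
    field_simp
  rw [e, div_le_div_iff₀ (by positivity) (by positivity)]
  calc ε ^ 2 * r ^ (2 * n + 3) * ((1 + r ^ 2) * (1 + τ ^ 2))
      = ε * ((ε * r) * ((r ^ (2 * n + 2) * (1 + r ^ 2)) * (1 + τ ^ 2))) := by ring
    _ ≤ ε * ((ε * r) * ((1 + r ^ 2) ^ (2 * n) * (1 + τ ^ 2))) := by gcongr
    _ ≤ _ := by gcongr

theorem stmt_9 (n : ℕ) (hn : 2 ≤ n) :
    ∃ C : ℝ, 0 < C ∧ ∀ ε : ℝ, ε ∈ Ioo (0 : ℝ) 1 →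
      (∫ r in Ioi (0 : ℝ), ∫ τ in Ioi (0 : ℝ),
          ε ^ 2 * r ^ (2 * n + 3) /
            (((1 + ε ^ 2 * r ^ 2) ^ 2 + ε ^ 4 * τ ^ 2) *
              (τ ^ 2 + (1 + r ^ 2) ^ 2) ^ (n + 1))) ≤ C * ε := by
  have hI : ∫ x in Ioi (0 : ℝ), (1 + x ^ 2)⁻¹ = π / 2 := by
    simp
  have hInt : IntegrableOn (fun x : ℝ => (1 + x ^ 2)⁻¹) (Ioi 0) :=
    integrable_inv_one_add_sq.integrableOn
  refine ⟨π / 2 * (π / 2), by positivity, fun ε hε => ?_⟩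
  have hε0 := hε.1
  calc _ ≤ ∫ r in Ioi (0 : ℝ), (ε * (π / 2)) * (1 + r ^ 2)⁻¹ := by
        refine integral_mono_of_nonneg ?_ (hInt.const_mul _) ?_
        · filter_upwards [ae_restrict_mem measurableSet_Ioi] with r hr
          have hr : 0 < r := hr
          exact integral_nonneg fun τ => by positivity
        · filter_upwards [ae_restrict_mem measurableSet_Ioi] with r hr
          have hr : 0 < r := hr
          calc _ ≤ ∫ τ in Ioi (0 : ℝ), (ε * (1 + r ^ 2)⁻¹) * (1 + τ ^ 2)⁻¹ := by
                refine integral_mono_of_nonneg ?_ (hInt.const_mul _) ?_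
                · exact Filter.Eventually.of_forall fun τ => by
                    simp only [Pi.zero_apply]; positivity
                · exact Filter.Eventually.of_forall fun τ => stmt_9_aux n hn ε r τ hε0 hr
            _ = _ := by rw [integral_const_mul, hI]; ring
    _ = _ := by rw [integral_const_mul, hI]; ring
end

section
/- Let n ≥ 2 be an integer. There exists a constant C > 0 (depending only on n) such that for every ε ∈ (0,1): ∫₀^∞ ∫₀^∞ ε⁴ r^{2n+5} / ( ((1+ε²r²)² + ε⁴τ²) (τ² + (1+r²)²)^{n+1} ) dτ dr ≤ C ε. -/
open MeasureTheory Real Set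

lemma aux_pt (n : ℕ) (hn : 2 ≤ n) (ε r τ : ℝ) (hε : 0 < ε) (hr : 0 < r) :
    ε ^ 4 * r ^ (2 * n + 5) /
            (((1 + ε ^ 2 * r ^ 2) ^ 2 + ε ^ 4 * τ ^ 2) *
              (τ ^ 2 + (1 + r ^ 2) ^ 2) ^ (n + 1)) ≤
      (ε * (1 + r ^ 2)⁻¹) * (1 + τ ^ 2)⁻¹ := by
  have hB : ε ^ 3 * r ^ 3 ≤ (1 + ε ^ 2 * r ^ 2) ^ 2 + ε ^ 4 * τ ^ 2 := by
    have h1 : 0 ≤ ε ^ 4 * τ ^ 2 := by positivity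
    have h2 : (ε * r) ^ 3 ≤ (1 + (ε * r) ^ 2) ^ 2 := by
      nlinarith [mul_nonneg (sq_nonneg (ε * r)) (sq_nonneg (ε * r - 1)), sq_nonneg (ε * r),
        sq_nonneg ((ε * r) ^ 2)]
    simp only [mul_pow] at h2
    linarith
  have hA : (1 + τ ^ 2) * ((1 + r ^ 2) * r ^ (2 * n + 2)) ≤
      (τ ^ 2 + (1 + r ^ 2) ^ 2) ^ (n + 1) := by
    have e1 : (1 + r ^ 2) * r ^ (2 * n + 2) ≤ ((1 + r ^ 2) ^ 2) ^ n := by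
      calc (1 + r ^ 2) * r ^ (2 * n + 2) = (1 + r ^ 2) * (r ^ 2) ^ (n + 1) := by
            rw [← pow_mul]; ring
        _ ≤ (1 + r ^ 2) * (1 + r ^ 2) ^ (n + 1) := by gcongr; linarith
        _ = (1 + r ^ 2) ^ (n + 2) := by ring
        _ ≤ (1 + r ^ 2) ^ (2 * n) := by
            apply pow_le_pow_right₀ _ (by omega)
            nlinarith [sq_nonneg r]
        _ = _ := by rw [← pow_mul]
    have e2 : ((1 + r ^ 2) ^ 2) ^ n ≤ (τ ^ 2 + (1 + r ^ 2) ^ 2) ^ n := by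
      gcongr; nlinarith [sq_nonneg τ]
    rw [pow_succ' (τ ^ 2 + (1 + r ^ 2) ^ 2) n]
    apply mul_le_mul _ (e1.trans e2) (by positivity) (by positivity)
    nlinarith [sq_nonneg r, sq_nonneg (r ^ 2)]
  rw [mul_assoc, ← mul_inv, ← div_eq_mul_inv, div_le_div_iff₀ (by positivity) (by positivity)]
  calc ε ^ 4 * r ^ (2 * n + 5) * ((1 + r ^ 2) * (1 + τ ^ 2))
      = ε * ((ε ^ 3 * r ^ 3) * ((1 + τ ^ 2) * ((1 + r ^ 2) * r ^ (2 * n + 2)))) := by ring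
    _ ≤ _ := by gcongr

theorem stmt_10 (n : ℕ) (hn : 2 ≤ n) :
    ∃ C : ℝ, 0 < C ∧ ∀ ε : ℝ, ε ∈ Ioo (0 : ℝ) 1 →
      (∫ r in Ioi (0 : ℝ), ∫ τ in Ioi (0 : ℝ),
          ε ^ 4 * r ^ (2 * n + 5) /
            (((1 + ε ^ 2 * r ^ 2) ^ 2 + ε ^ 4 * τ ^ 2) *
              (τ ^ 2 + (1 + r ^ 2) ^ 2) ^ (n + 1))) ≤ C * ε := by
  have hI : IntegrableOn (fun x : ℝ => (1 + x ^ 2)⁻¹) (Ioi 0) :=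
    integrable_inv_one_add_sq.integrableOn
  set I : ℝ := ∫ x in Ioi (0 : ℝ), (1 + x ^ 2)⁻¹ with hIdef
  refine ⟨I * I + 1, by nlinarith [mul_self_nonneg I], ?_⟩
  rintro ε ⟨hε, -⟩
  have key : (∫ r in Ioi (0 : ℝ), ∫ τ in Ioi (0 : ℝ),
          ε ^ 4 * r ^ (2 * n + 5) /
            (((1 + ε ^ 2 * r ^ 2) ^ 2 + ε ^ 4 * τ ^ 2) *
              (τ ^ 2 + (1 + r ^ 2) ^ 2) ^ (n + 1))) ≤
      ∫ r in Ioi (0 : ℝ), (ε * (1 + r ^ 2)⁻¹) * I := by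
    apply integral_mono_of_nonneg
    · filter_upwards [ae_restrict_mem measurableSet_Ioi] with r hr
      have hr : 0 < r := hr
      apply integral_nonneg
      intro τ
      dsimp only [Pi.zero_apply]
      positivity
    · exact (hI.const_mul ε).mul_const I
    · filter_upwards [ae_restrict_mem measurableSet_Ioi] with r hr
      have hr : 0 < r := hr
      rw [hIdef, ← integral_const_mul]
      apply integral_mono_of_nonneg
      · filter_upwards with τ
        dsimp only [Pi.zero_apply]
        positivity
      · exact hI.const_mul _
      · filter_upwards with τ
        exact aux_pt n hn ε r τ hε hr
  rw [integral_mul_const, integral_const_mul, ← hIdef] at key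
  nlinarith
end

section
/- Let n ≥ 2 be an integer. There exists a constant C > 0 (depending only on n) such that for every ε ∈ (0,1): ∫₀^∞ ∫₀^∞ ε² τ² r^{2n−1} / ( ((1+ε²r²)² + ε⁴τ²) (τ² + (1+r²)²)^{n+1} ) dτ dr ≤ C ε^{1/2}. -/
open MeasureTheory Real Set

lemma key_bound (n : ℕ) (hn : 2 ≤ n) (r τ : ℝ) (hr : 0 < r) :
    r ^ (2 * n - 1) * (1 + r ^ 2) * (1 + τ ^ 2) ^ ((3 : ℝ) / 4) ≤
      (τ ^ 2 + (1 + r ^ 2) ^ 2) ^ n := by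
  have hn' : (2 : ℝ) ≤ n := by exact_mod_cast hn
  have hs : 1 ≤ 1 + r ^ 2 := by nlinarith
  have hsX : (1 + r ^ 2) ^ 2 ≤ τ ^ 2 + (1 + r ^ 2) ^ 2 := by nlinarith [sq_nonneg τ]
  have hPX : 1 + τ ^ 2 ≤ τ ^ 2 + (1 + r ^ 2) ^ 2 := by nlinarith
  set s := 1 + r ^ 2 with hsdef
  set X := τ ^ 2 + s ^ 2 with hX
  have hX1 : 1 ≤ X := by nlinarith
  have hs0 : 0 < s := by linarith
  have hX0 : 0 < X := by linarith
  have h1 : r ≤ X ^ ((1 : ℝ) / 4) := by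
    have : r ^ 4 ≤ X := by nlinarith [sq_nonneg (r ^ 2)]
    calc r = (r ^ 4) ^ ((1 : ℝ) / 4) := by
          rw [← Real.rpow_natCast, ← Real.rpow_mul hr.le]; norm_num
      _ ≤ _ := Real.rpow_le_rpow (by positivity) this (by norm_num)
  have h2 : s ≤ X ^ ((1 : ℝ) / 2) := by
    rw [← Real.sqrt_eq_rpow]
    exact Real.le_sqrt_of_sq_le hsX
  have h3 : (1 + τ ^ 2) ^ ((3 : ℝ) / 4) ≤ X ^ ((3 : ℝ) / 4) :=
    Real.rpow_le_rpow (by positivity) hPX (by norm_num)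
  calc r ^ (2 * n - 1) * s * (1 + τ ^ 2) ^ ((3 : ℝ) / 4)
      ≤ (X ^ ((1 : ℝ) / 4)) ^ (2 * n - 1) * X ^ ((1 : ℝ) / 2) * X ^ ((3 : ℝ) / 4) := by
        gcongr
    _ = X ^ ((1 : ℝ) / 4 * (2 * n - 1) + 1 / 2 + 3 / 4) := by
        rw [← Real.rpow_natCast, ← Real.rpow_mul hX0.le, ← Real.rpow_add hX0,
          ← Real.rpow_add hX0, Nat.cast_sub (by omega)]
        push_cast; rfl
    _ ≤ X ^ (n : ℝ) := Real.rpow_le_rpow_of_exponent_le hX1 (by linarith)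
    _ = X ^ n := Real.rpow_natCast _ _

lemma integrand_bound (n : ℕ) (hn : 2 ≤ n) (ε r τ : ℝ) (hr : 0 < r) :
    ε ^ 2 * τ ^ 2 * r ^ (2 * n - 1) /
            (((1 + ε ^ 2 * r ^ 2) ^ 2 + ε ^ 4 * τ ^ 2) *
              (τ ^ 2 + (1 + r ^ 2) ^ 2) ^ (n + 1)) ≤
      (ε ^ 2 * (1 + r ^ 2)⁻¹) * (1 + τ ^ 2) ^ (-(3 : ℝ) / 4) := by
  have hk := key_bound n hn r τ hr
  have hA : 1 ≤ (1 + ε ^ 2 * r ^ 2) ^ 2 + ε ^ 4 * τ ^ 2 := by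
    have h1 : 0 ≤ ε ^ 2 * r ^ 2 := by positivity
    have h2 : 0 ≤ ε ^ 4 * τ ^ 2 := by positivity
    nlinarith
  have hX : τ ^ 2 ≤ τ ^ 2 + (1 + r ^ 2) ^ 2 := by nlinarith [sq_nonneg (1 + r ^ 2)]
  have hX0 : 0 < τ ^ 2 + (1 + r ^ 2) ^ 2 := by positivity
  have hP : 0 < (1 + τ ^ 2) ^ ((3 : ℝ) / 4) := by positivity
  rw [show -(3 : ℝ) / 4 = -(3 / 4) by ring, Real.rpow_neg (by positivity), mul_assoc (ε ^ 2) (1 + r ^ 2)⁻¹,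
    ← mul_inv, ← div_eq_mul_inv, div_le_div_iff₀ (by positivity) (by positivity)]
  set X := τ ^ 2 + (1 + r ^ 2) ^ 2
  calc ε ^ 2 * τ ^ 2 * r ^ (2 * n - 1) * ((1 + r ^ 2) * (1 + τ ^ 2) ^ ((3 : ℝ) / 4))
      = ε ^ 2 * (1 * (τ ^ 2 * (r ^ (2 * n - 1) * (1 + r ^ 2) * (1 + τ ^ 2) ^ ((3 : ℝ) / 4)))) := by
        ring
    _ ≤ ε ^ 2 * (((1 + ε ^ 2 * r ^ 2) ^ 2 + ε ^ 4 * τ ^ 2) * (X * X ^ n)) := by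
        gcongr
    _ = _ := by ring

theorem stmt_11 (n : ℕ) (hn : 2 ≤ n) :
    ∃ C : ℝ, 0 < C ∧ ∀ ε : ℝ, ε ∈ Ioo (0 : ℝ) 1 →
      (∫ r in Ioi (0 : ℝ), ∫ τ in Ioi (0 : ℝ),
          ε ^ 2 * τ ^ 2 * r ^ (2 * n - 1) /
            (((1 + ε ^ 2 * r ^ 2) ^ 2 + ε ^ 4 * τ ^ 2) *
              (τ ^ 2 + (1 + r ^ 2) ^ 2) ^ (n + 1))) ≤ C * ε ^ ((1 : ℝ) / 2) := by
  have hH : Integrable (fun τ : ℝ => (1 + τ ^ 2) ^ (-(3 : ℝ) / 4)) := by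
    have := integrable_rpow_neg_one_add_norm_sq (E := ℝ) (μ := volume) (r := 3 / 2) (by norm_num)
    refine this.congr (Filter.Eventually.of_forall fun x => ?_)
    simp only [Real.norm_eq_abs, sq_abs]
    norm_num
  set H : ℝ := ∫ τ in Ioi (0 : ℝ), (1 + τ ^ 2) ^ (-(3 : ℝ) / 4) with hHdef
  set G : ℝ := ∫ r in Ioi (0 : ℝ), (1 + r ^ 2)⁻¹ with hGdef
  have hH0 : 0 ≤ H := integral_nonneg fun τ => by positivity
  have hG0 : 0 ≤ G := integral_nonneg fun τ => by positivity
  refine ⟨G * H + 1, by positivity, fun ε hε => ?_⟩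
  have hpos : ∀ r ∈ Ioi (0 : ℝ), ∀ τ : ℝ, 0 ≤ ε ^ 2 * τ ^ 2 * r ^ (2 * n - 1) /
            (((1 + ε ^ 2 * r ^ 2) ^ 2 + ε ^ 4 * τ ^ 2) *
              (τ ^ 2 + (1 + r ^ 2) ^ 2) ^ (n + 1)) := by
    intro r hr τ
    have : 0 < r := hr
    positivity
  have step : (∫ r in Ioi (0 : ℝ), ∫ τ in Ioi (0 : ℝ),
          ε ^ 2 * τ ^ 2 * r ^ (2 * n - 1) /
            (((1 + ε ^ 2 * r ^ 2) ^ 2 + ε ^ 4 * τ ^ 2) *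
              (τ ^ 2 + (1 + r ^ 2) ^ 2) ^ (n + 1))) ≤
      ∫ r in Ioi (0 : ℝ), (ε ^ 2 * (1 + r ^ 2)⁻¹) * H := by
    apply integral_mono_of_nonneg
    · filter_upwards [ae_restrict_mem measurableSet_Ioi] with r hr
      exact integral_nonneg fun τ => hpos r hr τ
    · exact ((integrable_inv_one_add_sq.integrableOn).const_mul _).mul_const _
    · filter_upwards [ae_restrict_mem measurableSet_Ioi] with r hr
      rw [hHdef, ← integral_const_mul]
      apply integral_mono_of_nonneg
      · exact Filter.Eventually.of_forall fun τ => hpos r hr τ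
      · exact hH.integrableOn.const_mul _
      · exact Filter.Eventually.of_forall fun τ => integrand_bound n hn ε r τ hr
  rw [integral_mul_const, integral_const_mul, ← hGdef] at step
  have he : ε ^ 2 ≤ ε ^ ((1 : ℝ) / 2) := by
    rw [← Real.rpow_natCast]
    exact Real.rpow_le_rpow_of_exponent_ge hε.1 hε.2.le (by norm_num)
  have hGH : 0 ≤ G * H := by positivity
  have he0 : 0 ≤ ε ^ ((1 : ℝ) / 2) := Real.rpow_nonneg hε.1.le _
  calc _ ≤ _ := step
    _ = G * H * ε ^ 2 := by ring
    _ ≤ G * H * ε ^ ((1 : ℝ) / 2) := by gcongr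
    _ ≤ _ := by linarith
end

section
/- Let n ≥ 2 be an integer. There exists a constant C > 0 (depending only on n) such that for every ε ∈ (0,1]: ∫_{ℂ^n×ℝ} ( 4nε² / ((1+ε²|z|²)² + ε⁴τ²) ) · ( 4 / (τ² + (1+|z|²)²) )^{n} dz dτ ≤ C ε. -/
open MeasureTheory Real Set

theorem stmt_14 (n : ℕ) (hn : 2 ≤ n) :
    ∃ C : ℝ, 0 < C ∧ ∀ ε : ℝ, ε ∈ Ioc (0 : ℝ) 1 →
      (∫ p : (Fin n → ℂ) × ℝ,
          (4 * (n : ℝ) * ε ^ 2 / ((1 + ε ^ 2 * normSq p.1) ^ 2 + ε ^ 4 * p.2 ^ 2)) *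
            (4 / (p.2 ^ 2 + (1 + normSq p.1) ^ 2)) ^ n) ≤ C * ε := by
  have hn' : (2 : ℝ) ≤ n := by exact_mod_cast hn
  have i1 : Integrable (fun z : Fin n → ℂ => (1 + ‖z‖ ^ 2) ^ (-(4 * (n : ℝ) - 3) / 2)) := by
    apply integrable_rpow_neg_one_add_norm_sq
    have : Module.finrank ℝ (Fin n → ℂ) = n * 2 := by
      rw [Module.finrank_pi_fintype]; simp
    rw [this]; push_cast; linarith
  have i2 : Integrable (fun t : ℝ => (1 + ‖t‖ ^ 2) ^ (-(3 / 2 : ℝ) / 2)) := by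
    apply integrable_rpow_neg_one_add_norm_sq
    simp; norm_num
  have i3 := i1.mul_prod i2
  set g : (Fin n → ℂ) × ℝ → ℝ := fun p =>
    (1 + ‖p.1‖ ^ 2) ^ (-(4 * (n : ℝ) - 3) / 2) * (1 + ‖p.2‖ ^ 2) ^ (-(3 / 2 : ℝ) / 2) with hg
  have g0 : ∀ p, 0 ≤ g p := fun p => by simp only [hg]; positivity
  have G0 : 0 ≤ ∫ p, g p := integral_nonneg g0
  have s0 : ∀ z : Fin n → ℂ, ‖z‖ ^ 2 ≤ normSq z := by
    intro z
    have h0 : 0 ≤ normSq z := Finset.sum_nonneg fun i _ => by positivity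
    have : ‖z‖ ≤ √(normSq z) := by
      rw [pi_norm_le_iff_of_nonneg (by positivity)]
      intro i
      apply Real.le_sqrt_of_sq_le
      exact Finset.single_le_sum (f := fun i => ‖z i‖ ^ 2) (fun i _ => by positivity)
        (Finset.mem_univ i)
    calc ‖z‖ ^ 2 ≤ √(normSq z) ^ 2 := by gcongr
      _ = _ := Real.sq_sqrt h0
  refine ⟨4 * n * 4 ^ n * (∫ p, g p) + 1, by positivity, ?_⟩
  rintro ε ⟨he, he1⟩
  have key : ∀ p : (Fin n → ℂ) × ℝ,
      (4 * (n : ℝ) * ε ^ 2 / ((1 + ε ^ 2 * normSq p.1) ^ 2 + ε ^ 4 * p.2 ^ 2)) *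
            (4 / (p.2 ^ 2 + (1 + normSq p.1) ^ 2)) ^ n ≤ (4 * n * ε ^ 2 * 4 ^ n) * g p := by
    rintro ⟨z, t⟩
    have hs := s0 z
    have hz : 0 ≤ ‖z‖ ^ 2 := by positivity
    simp only [hg]
    generalize normSq z = s at *
    generalize ‖z‖ ^ 2 = w at *
    have hs0 : 0 ≤ s := hz.trans hs
    have a1 : 4 * (n : ℝ) * ε ^ 2 / ((1 + ε ^ 2 * s) ^ 2 + ε ^ 4 * t ^ 2) ≤ 4 * n * ε ^ 2 := by
      apply div_le_self (by positivity)
      have : 0 ≤ ε ^ 2 * s := by positivity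
      have : 0 ≤ ε ^ 4 * t ^ 2 := by positivity
      nlinarith
    have a2 : (4 / (t ^ 2 + (1 + s) ^ 2)) ^ n ≤
        4 ^ n * ((1 + w) ^ (-(4 * (n : ℝ) - 3) / 2) * (1 + ‖t‖ ^ 2) ^ (-(3 / 2 : ℝ) / 2)) := by
      have hD : 0 < t ^ 2 + (1 + s) ^ 2 := by positivity
      have e : (4 / (t ^ 2 + (1 + s) ^ 2)) ^ n = 4 ^ n *
          ((t ^ 2 + (1 + s) ^ 2) ^ (-(4 * (n : ℝ) - 3) / 4) *
            (t ^ 2 + (1 + s) ^ 2) ^ (-(3 / 2 : ℝ) / 2)) := by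
        rw [← Real.rpow_add hD, div_pow, div_eq_mul_inv, ← Real.rpow_natCast _ n,
          ← Real.rpow_natCast (t ^ 2 + (1 + s) ^ 2) n, ← Real.rpow_neg hD.le]
        congr 2; ring
      rw [e]
      have b1 : (t ^ 2 + (1 + s) ^ 2) ^ (-(4 * (n : ℝ) - 3) / 4) ≤
          (1 + w) ^ (-(4 * (n : ℝ) - 3) / 2) := by
        have : (1 + w) ^ (-(4 * (n : ℝ) - 3) / 2) =
            ((1 + w) ^ 2) ^ (-(4 * (n : ℝ) - 3) / 4) := by
          rw [← Real.rpow_natCast (1 + w) 2, ← Real.rpow_mul (by positivity)]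
          congr 1; push_cast; ring
        rw [this]
        apply Real.rpow_le_rpow_of_nonpos (by positivity)
        · nlinarith [sq_nonneg t]
        · linarith
      have b2 : (t ^ 2 + (1 + s) ^ 2) ^ (-(3 / 2 : ℝ) / 2) ≤
          (1 + ‖t‖ ^ 2) ^ (-(3 / 2 : ℝ) / 2) := by
        apply Real.rpow_le_rpow_of_nonpos (by positivity)
        · rw [Real.norm_eq_abs, sq_abs]; nlinarith
        · norm_num
      gcongr
    calc _ ≤ (4 * n * ε ^ 2) * (4 ^ n * ((1 + w) ^ (-(4 * (n : ℝ) - 3) / 2) *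
          (1 + ‖t‖ ^ 2) ^ (-(3 / 2 : ℝ) / 2))) := by
          apply mul_le_mul a1 a2 <;> positivity
      _ = _ := by ring
  have h0 : ∀ z : Fin n → ℂ, 0 ≤ normSq z := fun z => le_trans (by positivity) (s0 z)
  calc _ ≤ ∫ p, (4 * n * ε ^ 2 * 4 ^ n) * g p := by
        apply integral_mono_of_nonneg (Filter.Eventually.of_forall ?_)
          (i3.const_mul _) (Filter.Eventually.of_forall key)
        intro p
        have := h0 p.1
        simp only [Pi.zero_apply]
        positivity
    _ = (4 * n * 4 ^ n * ∫ p, g p) * ε ^ 2 := by rw [integral_const_mul]; ring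
    _ ≤ (4 * n * 4 ^ n * ∫ p, g p) * ε := by
        gcongr
        nlinarith
    _ ≤ _ := by
        gcongr
        linarith
end
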